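/- Let p : (0,1) → ℝ be twice continuously differentiable, and let ρ, u : ℝ × ℝ → ℝ be smooth with 0 < ρ(t,x) < 1 for all (t,x), satisfying the continuity equation ∂_t ρ + ∂_x(ρ u) = 0 pointwise. Define the desired velocity w := u + ∂_x(p(ρ)). Then ∂_t(ρ w) + ∂_x(ρ u w) = 0 holds pointwise if and only if ∂_t(ρ u) + ∂_x(ρ u²) − ∂_x(ρ² p'(ρ) ∂_x u) = 0 holds pointwise. -/

import Mathlib

/-! Under the continuity equation both momentum equations can be put in non-conservative form:
`∂ₜ(ρ w) + ∂ₓ(ρ u w) = ρ (∂ₜ w + u ∂ₓ w)`, and likewise with `u` in place of `w`. The two left-hand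
sides therefore differ by `ρ (∂ₜ + u ∂ₓ)(p'(ρ) ∂ₓρ) + ∂ₓ(ρ² p'(ρ) ∂ₓu)`. This vanishes identically:
it suffices to substitute `∂ₜρ = -ρ ∂ₓu - u ∂ₓρ` and its `x`-derivative, where
`∂ₜ∂ₓρ = ∂ₓ∂ₜρ` (`deriv_deriv_comm`). Hence the two expressions agree at every point. -/

lemma hasDerivAt_slice_right {F : ℝ × ℝ → ℝ} {t x : ℝ} (hF : DifferentiableAt ℝ F (t, x)) :
    HasDerivAt (fun y => F (t, y)) (fderiv ℝ F (t, x) (0, 1)) x :=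
  hF.hasFDerivAt.comp_hasDerivAt x ((hasDerivAt_const x t).prodMk (hasDerivAt_id x))

lemma hasDerivAt_slice_left {F : ℝ × ℝ → ℝ} {t x : ℝ} (hF : DifferentiableAt ℝ F (t, x)) :
    HasDerivAt (fun s => F (s, x)) (fderiv ℝ F (t, x) (1, 0)) t :=
  hF.hasFDerivAt.comp_hasDerivAt t ((hasDerivAt_id t).prodMk (hasDerivAt_const t x))

lemma deriv_right_eq {f : ℝ → ℝ → ℝ}
    (hf : ContDiff ℝ (⊤ : ℕ∞) (fun q : ℝ × ℝ => f q.1 q.2)) (t x : ℝ) :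
    deriv (f t) x = fderiv ℝ (fun q : ℝ × ℝ => f q.1 q.2) (t, x) (0, 1) :=
  (hasDerivAt_slice_right (hf.differentiable (by simp) (t, x))).deriv

lemma deriv_left_eq {f : ℝ → ℝ → ℝ}
    (hf : ContDiff ℝ (⊤ : ℕ∞) (fun q : ℝ × ℝ => f q.1 q.2)) (t x : ℝ) :
    deriv (fun s => f s x) t = fderiv ℝ (fun q : ℝ × ℝ => f q.1 q.2) (t, x) (1, 0) :=
  (hasDerivAt_slice_left (hf.differentiable (by simp) (t, x))).deriv

lemma contDiff_deriv_right {f : ℝ → ℝ → ℝ}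
    (hf : ContDiff ℝ (⊤ : ℕ∞) (fun q : ℝ × ℝ => f q.1 q.2)) :
    ContDiff ℝ (⊤ : ℕ∞) (fun q : ℝ × ℝ => deriv (f q.1) q.2) := by
  have h : (fun q : ℝ × ℝ => deriv (f q.1) q.2)
      = fun q => fderiv ℝ (fun q : ℝ × ℝ => f q.1 q.2) q (0, 1) :=
    funext fun q => deriv_right_eq hf q.1 q.2
  rw [h]
  exact (hf.fderiv_right (by simp)).clm_apply contDiff_const

lemma differentiableAt_right {f : ℝ → ℝ → ℝ}
    (hf : ContDiff ℝ (⊤ : ℕ∞) (fun q : ℝ × ℝ => f q.1 q.2)) (t x : ℝ) :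
    DifferentiableAt ℝ (f t) x :=
  (hasDerivAt_slice_right (hf.differentiable (by simp) (t, x))).differentiableAt

lemma differentiableAt_left {f : ℝ → ℝ → ℝ}
    (hf : ContDiff ℝ (⊤ : ℕ∞) (fun q : ℝ × ℝ => f q.1 q.2)) (t x : ℝ) :
    DifferentiableAt ℝ (fun s => f s x) t :=
  (hasDerivAt_slice_left (hf.differentiable (by simp) (t, x))).differentiableAt

/-- Mixed second partial derivatives commute. -/
lemma deriv_deriv_comm {f : ℝ → ℝ → ℝ}
    (hf : ContDiff ℝ (⊤ : ℕ∞) (fun q : ℝ × ℝ => f q.1 q.2)) (t x : ℝ) :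
    deriv (fun s => deriv (f s) x) t = deriv (fun y => deriv (fun s => f s y) t) x := by
  have hd : DifferentiableAt ℝ (fderiv ℝ (fun q : ℝ × ℝ => f q.1 q.2)) (t, x) :=
    (hf.fderiv_right (m := (⊤ : ℕ∞)) (by simp)).differentiable (by simp) _
  have hsymm : IsSymmSndFDerivAt ℝ (fun q : ℝ × ℝ => f q.1 q.2) (t, x) :=
    hf.contDiffAt.isSymmSndFDerivAt (by
      rw [minSmoothness_of_isRCLikeNormedField]
      exact WithTop.coe_le_coe.2 (le_top : (2 : ℕ∞) ≤ ⊤))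
  simp only [deriv_right_eq hf, deriv_left_eq hf]
  have h1 := hasDerivAt_slice_left (hd.clm_apply (differentiableAt_const ((0 : ℝ), (1 : ℝ))))
  have h2 := hasDerivAt_slice_right (hd.clm_apply (differentiableAt_const ((1 : ℝ), (0 : ℝ))))
  rw [h1.deriv, h2.deriv, fderiv_clm_apply hd (differentiableAt_const _),
    fderiv_clm_apply hd (differentiableAt_const _)]
  simpa using hsymm (1, 0) (0, 1)

/-- Equivalence, for smooth solutions of the continuity equation, between the Aw–Rascle
momentum equation (with gradient offset `w = u + ∂ₓ p(ρ)`) and the pressureless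
compressible Navier–Stokes momentum equation with viscosity `λ(ρ) = ρ² p'(ρ)`. -/
theorem stmt1
    (p : ℝ → ℝ) (hp : ContDiffOn ℝ 2 p (Set.Ioo 0 1))
    (ρ u : ℝ → ℝ → ℝ)
    (hρ : ContDiff ℝ (⊤ : ℕ∞) (fun q : ℝ × ℝ => ρ q.1 q.2))
    (hu : ContDiff ℝ (⊤ : ℕ∞) (fun q : ℝ × ℝ => u q.1 q.2))
    (hρrange : ∀ t x, ρ t x ∈ Set.Ioo (0 : ℝ) 1)
    (hcont : ∀ t x,
      deriv (fun s => ρ s x) t + deriv (fun y => ρ t y * u t y) x = 0)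
    (w : ℝ → ℝ → ℝ)
    (hw : ∀ t x, w t x = u t x + deriv (fun y => p (ρ t y)) x) :
    (∀ t x,
      deriv (fun s => ρ s x * w s x) t
        + deriv (fun y => ρ t y * u t y * w t y) x = 0)
    ↔ (∀ t x,
      deriv (fun s => ρ s x * u s x) t
        + deriv (fun y => ρ t y * (u t y) ^ 2) x
        - deriv (fun y => (ρ t y) ^ 2 * deriv p (ρ t y) * deriv (u t) y) x = 0) := by
  have hρx := contDiff_deriv_right hρ
  have hux := contDiff_deriv_right hu
  have hpd : ∀ r ∈ Set.Ioo (0 : ℝ) 1, DifferentiableAt ℝ p r := fun r hr =>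
    (hp.contDiffAt (isOpen_Ioo.mem_nhds hr)).differentiableAt (by simp)
  have hqd : ∀ r ∈ Set.Ioo (0 : ℝ) 1, DifferentiableAt ℝ (deriv p) r := fun r hr =>
    ((hp.deriv_of_isOpen isOpen_Ioo (m := 1) (by norm_num)).contDiffAt
      (isOpen_Ioo.mem_nhds hr)).differentiableAt (by simp)
  have hw' : ∀ t x, w t x = u t x + deriv p (ρ t x) * deriv (ρ t) x := fun t x => by
    rw [hw]
    congr 1
    exact ((hpd _ (hρrange t x)).hasDerivAt.comp x
      (differentiableAt_right hρ t x).hasDerivAt).deriv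
  have hρt : ∀ t x, deriv (fun s => ρ s x) t
      = -(deriv (ρ t) x * u t x + ρ t x * deriv (u t) x) := fun t x => by
    have h := hcont t x
    rw [((differentiableAt_right hρ t x).hasDerivAt.fun_mul
      (differentiableAt_right hu t x).hasDerivAt).deriv] at h
    linarith
  refine forall_congr' fun t => forall_congr' fun x => ?_
  simp only [hw']
  have hRx := (differentiableAt_right hρ t x).hasDerivAt
  have hRt := (differentiableAt_left hρ t x).hasDerivAt
  have hUx := (differentiableAt_right hu t x).hasDerivAt
  have hUt := (differentiableAt_left hu t x).hasDerivAt
  have hRxx := (differentiableAt_right (f := fun t x => deriv (ρ t) x) hρx t x).hasDerivAt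
  have hRxt := (differentiableAt_left (f := fun t x => deriv (ρ t) x) hρx t x).hasDerivAt
  have hUxx := (differentiableAt_right (f := fun t x => deriv (u t) x) hux t x).hasDerivAt
  have hq := (hqd _ (hρrange t x)).hasDerivAt
  have hqx := hq.comp x hRx
  have hqt := HasDerivAt.comp (h := fun s => ρ s x) t hq hRt
  -- The `x`-derivative of the continuity equation, with the mixed partials interchanged.
  have hmix := deriv_deriv_comm hρ t x
  simp only [hρt] at hmix
  have hmix' := hmix.trans ((hRxx.mul hUx).add (hRx.mul hUxx)).neg.deriv
  have e1 := (hRt.mul (hUt.add (hqt.mul hRxt))).deriv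
  have e2 := ((hRx.mul hUx).mul (hUx.add (hqx.mul hRxx))).deriv
  have e3 := (hRt.mul hUt).deriv
  have e4 := (hRx.mul (hUx.pow 2)).deriv
  have e5 := (((hRx.pow 2).mul hqx).mul hUxx).deriv
  simp only [Pi.mul_def, Pi.add_def, Pi.pow_def, Function.comp_def] at e1 e2 e3 e4 e5
  rw [e1, e2, e3, e4, e5, hmix', hρt]
  refine Eq.congr ?_ rfl
  simp
  ring
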